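/- (Lyapunov decrease for the scalar-input high-order-tuner learning system.) Along any solution of the scalar-input high-order-tuner system, the Lyapunov function V(t) = (Λ/γ)‖ϑ̃(t)‖² + (Λ/γ)‖θ̃(t) − ϑ̃(t)‖² + e(t)ᵀ P e(t) satisfies V'(t) ≤ −(2βΛ/γ)‖θ̃(t) − ϑ̃(t)‖² − Λ‖e(t)‖² ≤ −c₂‖x₁(t)‖² for all t ≥ t₀, where c₂ = Λ·min{1, 2β/γ}. -/

import Mathlib

open Matrix MeasureTheory Filter intervalIntegral

/-!
Along a solution, write `w = θ - ϑ`. The weight `Λ / γ` is chosen so that the indefinite term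
`2 Λ (ϑ ⬝ᵥ Φ) (e ⬝ᵥ P B)` in the derivative of `eᵀ P e` is cancelled by the derivative of
`(Λ / γ) ‖ϑ‖²`. By the Lyapunov equation this leaves
`V' = -eᵀ Q e + 4 Λ (e ⬝ᵥ P B) (w ⬝ᵥ Φ) - (2 β Λ / γ) (1 + μ ‖Φ‖²) ‖w‖²`.
Young's and the Cauchy–Schwarz inequalities bound the cross term by
`Λ (‖e‖² + 4 ‖P B‖² ‖w‖² ‖Φ‖²)`; the normalization `μ ≥ 2 γ ‖P B‖² / β` absorbs its second summand,
and `Q ≥ 2 I` absorbs the first one.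
-/

section Calculus

variable {ι κ 𝕜 𝔸 : Type*} [Fintype ι] [NontriviallyNormedField 𝕜] {s : Set 𝕜} {t : 𝕜}

theorem hasDerivWithinAt_dotProduct [NormedRing 𝔸] [NormedAlgebra 𝕜 𝔸] {f g : 𝕜 → ι → 𝔸}
    {f' g' : ι → 𝔸} (hf : HasDerivWithinAt f f' s t) (hg : HasDerivWithinAt g g' s t) :
    HasDerivWithinAt (fun τ => f τ ⬝ᵥ g τ) (f' ⬝ᵥ g t + f t ⬝ᵥ g') s t := by
  simp only [dotProduct, ← Finset.sum_add_distrib]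
  exact HasDerivWithinAt.fun_sum fun i _ =>
    (hasDerivWithinAt_pi.1 hf i).mul (hasDerivWithinAt_pi.1 hg i)

theorem hasDerivWithinAt_mulVec [NormedRing 𝔸] [NormedAlgebra 𝕜 𝔸]
    (M : Matrix κ ι 𝔸) {f : 𝕜 → ι → 𝔸} {f' : ι → 𝔸} (hf : HasDerivWithinAt f f' s t) :
    HasDerivWithinAt (fun τ => M *ᵥ f τ) (M *ᵥ f') s t :=
  hasDerivWithinAt_pi.2 fun i => by
    simpa only [mulVec, zero_dotProduct, zero_add] using
      hasDerivWithinAt_dotProduct (hasDerivWithinAt_const t s (M i)) hf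

variable [NormedCommRing 𝔸] [NormedAlgebra 𝕜 𝔸] {f : 𝕜 → ι → 𝔸} {f' : ι → 𝔸}

theorem hasDerivWithinAt_dotProduct_self (hf : HasDerivWithinAt f f' s t) :
    HasDerivWithinAt (fun τ => f τ ⬝ᵥ f τ) (2 * (f t ⬝ᵥ f')) s t := by
  simpa only [dotProduct_comm f', two_mul] using hasDerivWithinAt_dotProduct hf hf

theorem hasDerivWithinAt_dotProduct_mulVec_self {P : Matrix ι ι 𝔸} (hP : P.IsSymm)
    (hf : HasDerivWithinAt f f' s t) :
    HasDerivWithinAt (fun τ => f τ ⬝ᵥ P *ᵥ f τ) (2 * (f t ⬝ᵥ P *ᵥ f')) s t := by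
  have hsymm : f' ⬝ᵥ P *ᵥ f t = f t ⬝ᵥ P *ᵥ f' := by
    rw [← dotProduct_transpose_mulVec, hP.eq]
  simpa only [hsymm, two_mul] using
    hasDerivWithinAt_dotProduct hf (hasDerivWithinAt_mulVec P hf)

end Calculus

section QuadraticForms

variable {ι κ R : Type*} [Fintype ι] [Fintype κ]

theorem two_mul_dotProduct_mulVec_mulVec_of_lyapunov [CommRing R] {A P Q : Matrix ι ι R}
    (hP : P.IsSymm) (hLyap : Aᵀ * P + P * A = -Q) (x : ι → R) :
    2 * (x ⬝ᵥ P *ᵥ A *ᵥ x) = -(x ⬝ᵥ Q *ᵥ x) := by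
  have htranspose : x ⬝ᵥ Aᵀ *ᵥ P *ᵥ x = x ⬝ᵥ P *ᵥ A *ᵥ x := by
    rw [dotProduct_transpose_mulVec, dotProduct_comm, ← dotProduct_transpose_mulVec, hP.eq,
      dotProduct_comm]
  calc 2 * (x ⬝ᵥ P *ᵥ A *ᵥ x) = x ⬝ᵥ Aᵀ *ᵥ P *ᵥ x + x ⬝ᵥ P *ᵥ A *ᵥ x := by
        rw [htranspose, two_mul]
    _ = x ⬝ᵥ (Aᵀ * P + P * A) *ᵥ x := by
        rw [add_mulVec, dotProduct_add, mulVec_mulVec, mulVec_mulVec]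
    _ = -(x ⬝ᵥ Q *ᵥ x) := by rw [hLyap, neg_mulVec, dotProduct_neg]

theorem mul_dotProduct_self_le_of_posSemidef_sub_smul_one [DecidableEq ι] {Q : Matrix ι ι ℝ}
    {c : ℝ} (hQ : (Q - c • 1).PosSemidef) (x : ι → ℝ) : c * (x ⬝ᵥ x) ≤ x ⬝ᵥ Q *ᵥ x := by
  have hnonneg := hQ.dotProduct_mulVec_nonneg x
  rwa [star_trivial, sub_mulVec, smul_mulVec, one_mulVec, dotProduct_sub, dotProduct_smul,
    smul_eq_mul, sub_nonneg] at hnonneg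

variable [CommRing R] [LinearOrder R] [IsStrictOrderedRing R]

theorem dotProduct_self_nonneg (x : ι → R) : 0 ≤ x ⬝ᵥ x :=
  Finset.sum_nonneg fun i _ => mul_self_nonneg (x i)

theorem dotProduct_sq_le_dotProduct_self_mul_dotProduct_self (x y : ι → R) :
    (x ⬝ᵥ y) ^ 2 ≤ (x ⬝ᵥ x) * (y ⬝ᵥ y) := by
  simpa only [dotProduct, pow_two] using Finset.sum_mul_sq_le_sq_mul_sq Finset.univ x y

theorem two_mul_mul_dotProduct_le_add (c : R) (x y : ι → R) :
    2 * c * (x ⬝ᵥ y) ≤ x ⬝ᵥ x + c ^ 2 * (y ⬝ᵥ y) := by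
  have hsq := dotProduct_self_nonneg (x - c • y)
  simp only [sub_dotProduct, dotProduct_sub, smul_dotProduct, dotProduct_smul, smul_eq_mul,
    dotProduct_comm y x] at hsq
  linarith

theorem four_mul_dotProduct_mul_dotProduct_le (x b : ι → R) (w φ : κ → R) :
    4 * ((x ⬝ᵥ b) * (w ⬝ᵥ φ)) ≤ x ⬝ᵥ x + 4 * (b ⬝ᵥ b) * ((w ⬝ᵥ w) * (φ ⬝ᵥ φ)) :=
  calc 4 * ((x ⬝ᵥ b) * (w ⬝ᵥ φ)) = 2 * (2 * (w ⬝ᵥ φ)) * (x ⬝ᵥ b) := by ring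
    _ ≤ x ⬝ᵥ x + (2 * (w ⬝ᵥ φ)) ^ 2 * (b ⬝ᵥ b) := two_mul_mul_dotProduct_le_add _ x b
    _ = x ⬝ᵥ x + 4 * (b ⬝ᵥ b) * (w ⬝ᵥ φ) ^ 2 := by ring
    _ ≤ x ⬝ᵥ x + 4 * (b ⬝ᵥ b) * ((w ⬝ᵥ w) * (φ ⬝ᵥ φ)) := by
        have hb := dotProduct_self_nonneg b
        gcongr
        exact dotProduct_sq_le_dotProduct_self_mul_dotProduct_self w φ

end QuadraticForms

theorem neg_mul_sub_mul_le_neg_mul_min_mul_add {R : Type*} [CommRing R] [LinearOrder R]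
    [IsStrictOrderedRing R] {c a x y : R} (hc : 0 ≤ c) (hx : 0 ≤ x) (hy : 0 ≤ y) :
    -(c * a) * y - c * x ≤ -(c * min 1 a) * (x + y) := by
  have hmin : min 1 a * x + min 1 a * y ≤ 1 * x + a * y := by
    gcongr
    exacts [min_le_left 1 a, min_le_right 1 a]
  linear_combination c * hmin

section HighOrderTuner

variable {ι κ : Type*} [Fintype ι] [Fintype κ]

/-- The Lyapunov function of the high-order tuner as a function of the state `(e, θ, ϑ)`, where `c`
is the common weight of the two parameter-error terms (`Λ / γ` in the scalar-input system). -/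
def hotLyapunov (c : ℝ) (P : Matrix ι ι ℝ) (e : ι → ℝ) (θ ϑ : κ → ℝ) : ℝ :=
  c * (ϑ ⬝ᵥ ϑ) + c * ((θ - ϑ) ⬝ᵥ (θ - ϑ)) + e ⬝ᵥ P *ᵥ e

variable {A P Q : Matrix ι ι ℝ} {B : ι → ℝ} {Λ γ β μ : ℝ}

theorem hasDerivWithinAt_hotLyapunov (hP : P.IsSymm) (hLyap : Aᵀ * P + P * A = -Q) (hγ : γ ≠ 0)
    {s : Set ℝ} {t : ℝ} {φ : κ → ℝ} {e : ℝ → ι → ℝ} {θ ϑ : ℝ → κ → ℝ}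
    (he : HasDerivWithinAt e (A *ᵥ e t + (θ t ⬝ᵥ φ) • (Λ • B)) s t)
    (hϑ : HasDerivWithinAt ϑ ((-γ * (e t ⬝ᵥ P *ᵥ B)) • φ) s t)
    (hθ : HasDerivWithinAt θ ((-β * (1 + μ * (φ ⬝ᵥ φ))) • (θ t - ϑ t)) s t) :
    HasDerivWithinAt (fun τ => hotLyapunov (Λ / γ) P (e τ) (θ τ) (ϑ τ))
      (-(e t ⬝ᵥ Q *ᵥ e t) + Λ * (4 * ((e t ⬝ᵥ P *ᵥ B) * ((θ t - ϑ t) ⬝ᵥ φ))) -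
        2 * β * Λ / γ * (1 + μ * (φ ⬝ᵥ φ)) * ((θ t - ϑ t) ⬝ᵥ (θ t - ϑ t))) s t := by
  have hV := (((hasDerivWithinAt_dotProduct_self hϑ).const_mul (Λ / γ)).add
    ((hasDerivWithinAt_dotProduct_self (hθ.sub hϑ)).const_mul (Λ / γ))).add
    (hasDerivWithinAt_dotProduct_mulVec_self hP he)
  refine hV.congr_deriv ?_
  have hsplit : θ t ⬝ᵥ φ = (θ t - ϑ t) ⬝ᵥ φ + ϑ t ⬝ᵥ φ := by
    rw [← add_dotProduct, sub_add_cancel]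
  rw [hsplit, ← two_mul_dotProduct_mulVec_mulVec_of_lyapunov hP hLyap, Pi.sub_apply,
    dotProduct_sub (θ t - ϑ t)]
  simp only [mulVec_add, mulVec_smul, dotProduct_add, dotProduct_smul, smul_eq_mul]
  field_simp
  ring

theorem hotLyapunov_rate_le (hΛ0 : 0 ≤ Λ) (hΛ1 : Λ ≤ 1) [DecidableEq ι]
    (hQ : (Q - (2 : ℝ) • 1).PosSemidef) (hγ : 0 < γ) (hβ : 0 < β) {b : ι → ℝ}
    (hμ : 2 * γ * (b ⬝ᵥ b) / β ≤ μ) (x : ι → ℝ) (w φ : κ → ℝ) :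
    -(x ⬝ᵥ Q *ᵥ x) + Λ * (4 * ((x ⬝ᵥ b) * (w ⬝ᵥ φ))) -
        2 * β * Λ / γ * (1 + μ * (φ ⬝ᵥ φ)) * (w ⬝ᵥ w) ≤
      -(2 * β * Λ / γ) * (w ⬝ᵥ w) - Λ * (x ⬝ᵥ x) := by
  have hgain : 4 * (b ⬝ᵥ b) ≤ 2 * β / γ * μ := by
    rw [div_le_iff₀ hβ] at hμ
    rw [div_mul_eq_mul_div, le_div_iff₀ hγ]
    linarith
  have hwφ : 0 ≤ (w ⬝ᵥ w) * (φ ⬝ᵥ φ) :=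
    mul_nonneg (dotProduct_self_nonneg w) (dotProduct_self_nonneg φ)
  have hcross : Λ * (4 * ((x ⬝ᵥ b) * (w ⬝ᵥ φ))) ≤
      Λ * (x ⬝ᵥ x + 2 * β / γ * μ * ((w ⬝ᵥ w) * (φ ⬝ᵥ φ))) := by
    gcongr
    exact (four_mul_dotProduct_mul_dotProduct_le x b w φ).trans (by gcongr)
  have hΛx : Λ * (x ⬝ᵥ x) ≤ x ⬝ᵥ x := mul_le_of_le_one_left (dotProduct_self_nonneg x) hΛ1
  have hdecay : -(x ⬝ᵥ Q *ᵥ x) ≤ -(2 * (Λ * (x ⬝ᵥ x))) := by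
    linarith [mul_dotProduct_self_le_of_posSemidef_sub_smul_one hQ x]
  linear_combination hcross + hdecay

theorem scalar_hot_lyapunov_decrease_general [DecidableEq ι] (hΛ0 : 0 ≤ Λ) (hΛ1 : Λ ≤ 1)
    (hP : P.IsSymm) (hLyap : Aᵀ * P + P * A = -Q) (hQ : (Q - (2 : ℝ) • 1).PosSemidef)
    (hγ : 0 < γ) (hβ : 0 < β) (hμ : 2 * γ * (P *ᵥ B ⬝ᵥ P *ᵥ B) / β ≤ μ)
    {s : Set ℝ} {t : ℝ} {φ : κ → ℝ} {e : ℝ → ι → ℝ} {θ ϑ : ℝ → κ → ℝ}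
    (he : HasDerivWithinAt e (A *ᵥ e t + (θ t ⬝ᵥ φ) • (Λ • B)) s t)
    (hϑ : HasDerivWithinAt ϑ ((-γ * (e t ⬝ᵥ P *ᵥ B)) • φ) s t)
    (hθ : HasDerivWithinAt θ ((-β * (1 + μ * (φ ⬝ᵥ φ))) • (θ t - ϑ t)) s t) :
    ∃ v : ℝ, HasDerivWithinAt (fun τ => hotLyapunov (Λ / γ) P (e τ) (θ τ) (ϑ τ)) v s t ∧
      v ≤ -(2 * β * Λ / γ) * ((θ t - ϑ t) ⬝ᵥ (θ t - ϑ t)) - Λ * (e t ⬝ᵥ e t) ∧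
      -(2 * β * Λ / γ) * ((θ t - ϑ t) ⬝ᵥ (θ t - ϑ t)) - Λ * (e t ⬝ᵥ e t) ≤
        -(Λ * min 1 (2 * β / γ)) * (e t ⬝ᵥ e t + (θ t - ϑ t) ⬝ᵥ (θ t - ϑ t)) := by
  refine ⟨_, hasDerivWithinAt_hotLyapunov hP hLyap hγ.ne' he hϑ hθ,
    hotLyapunov_rate_le hΛ0 hΛ1 hQ hγ hβ hμ (e t) (θ t - ϑ t) φ, ?_⟩
  have hcoeff : 2 * β * Λ / γ = Λ * (2 * β / γ) := by ring
  rw [hcoeff]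
  exact neg_mul_sub_mul_le_neg_mul_min_mul_add hΛ0 (dotProduct_self_nonneg _)
    (dotProduct_self_nonneg _)

end HighOrderTuner

/-- Lyapunov decrease for the scalar-input high-order-tuner learning
system. Along any solution, `V(t) = (Λ/γ)‖ϑ̃‖² + (Λ/γ)‖θ̃−ϑ̃‖² + eᵀPe` satisfies
`V'(t) ≤ −(2βΛ/γ)‖θ̃−ϑ̃‖² − Λ‖e‖² ≤ −c₂‖x₁‖²` with `c₂ = Λ·min{1, 2β/γ}`. -/
theorem scalar_hot_lyapunov_decrease
    (n N : ℕ)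
    (AH : Matrix (Fin n) (Fin n) ℝ) (B : Fin n → ℝ)
    (Λ : ℝ) (hΛ0 : 0 < Λ) (hΛ1 : Λ ≤ 1)
    (Q P : Matrix (Fin n) (Fin n) ℝ)
    (hQ : Q.PosDef) (hP : P.PosDef)
    (hLyap : AHᵀ * P + P * AH = -Q)
    (hQ2 : (Q - (2 : ℝ) • 1).PosSemidef)
    (γ β μ : ℝ) (hγ : 0 < γ) (hβ : 0 < β)
    (hμ : 2 * γ * (P.mulVec B ⬝ᵥ P.mulVec B) / β ≤ μ)
    (t₀ : ℝ)
    (Φ : ℝ → Fin N → ℝ)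
    (hΦcont : ContinuousOn Φ (Set.Ici t₀))
    (hΦbdd : ∃ C, ∀ t ∈ Set.Ici t₀, Real.sqrt (∑ j, Φ t j ^ 2) ≤ C)
    (t₁ : ℝ) (ht₁ : t₀ ≤ t₁)
    (e : ℝ → Fin n → ℝ) (θ ϑ : ℝ → Fin N → ℝ)
    (he : ∀ t ∈ Set.Ici t₁, HasDerivAt e (AH.mulVec (e t) + (θ t ⬝ᵥ Φ t) • (Λ • B)) t)
    (hϑ : ∀ t ∈ Set.Ici t₁, HasDerivAt ϑ ((-γ * (e t ⬝ᵥ P.mulVec B)) • Φ t) t)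
    (hθ : ∀ t ∈ Set.Ici t₁, HasDerivAt θ ((-β * (1 + μ * (Φ t ⬝ᵥ Φ t))) • (θ t - ϑ t)) t) :
    ∀ t ∈ Set.Ici t₁, ∃ v : ℝ,
      HasDerivAt (fun s => (Λ / γ) * (ϑ s ⬝ᵥ ϑ s) +
        (Λ / γ) * ((θ s - ϑ s) ⬝ᵥ (θ s - ϑ s)) + e s ⬝ᵥ P.mulVec (e s)) v t ∧
      v ≤ -(2 * β * Λ / γ) * ((θ t - ϑ t) ⬝ᵥ (θ t - ϑ t)) - Λ * (e t ⬝ᵥ e t) ∧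
      -(2 * β * Λ / γ) * ((θ t - ϑ t) ⬝ᵥ (θ t - ϑ t)) - Λ * (e t ⬝ᵥ e t) ≤
        -(Λ * min 1 (2 * β / γ)) * (e t ⬝ᵥ e t + (θ t - ϑ t) ⬝ᵥ (θ t - ϑ t)) := by
  intro t ht
  simpa only [hotLyapunov, hasDerivWithinAt_univ] using
    scalar_hot_lyapunov_decrease_general hΛ0.le hΛ1 (isHermitian_iff_isSymm.1 hP.isHermitian)
      hLyap hQ2 hγ hβ hμ (he t ht).hasDerivWithinAt (hϑ t ht).hasDerivWithinAt
      (hθ t ht).hasDerivWithinAt (s := Set.univ)
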